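/- For every n ≥ 3, the arrangement of 3n + 2 lines in ℙ²(ℂ) consisting of the zero loci of the linear factors of the polynomial x·y·(xⁿ − yⁿ)(yⁿ − zⁿ)(zⁿ − xⁿ) is supersolvable; indeed, the point [0:0:1] is a modular point of this arrangement. -/

import Mathlib

/-!
Write `P = [0:0:1]`. The lines through `P` are `x = 0`, `y = 0` and the `x = ζ y`, so a point
`Q = [q₀:q₁:q₂] ≠ P` is joined to `P` by a line of the arrangement as soon as `q₀ q₁ = 0` or
`q₀ⁿ = q₁ⁿ`. If `q₀ q₁ ≠ 0` and `Q` lies on two lines of the arrangement, then either one of them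
is of the form `x = ζ y`, or both belong to the families `y = ζ z` and `z = ζ x`. Two distinct
lines of one such family only meet where `y = z = 0`, respectively `x = z = 0`, so in the latter
case there is one line of each family, and `y = ζ z = ζ η x` (`exists_mem_of_isSing`).

The line count `card_fermatPlus` holds because `ℂ` has `n` distinct `n`-th roots of unity and the
five coefficient patterns are pairwise non-proportional.
-/

open scoped Classical

noncomputable section

/-- The projective plane `ℙ²(ℂ)`, used both for points and for lines
(a line being recorded by its coefficient vector, up to scalar). -/
abbrev P2 := Projectivization ℂ (Fin 3 → ℂ)

lemma vne₀ {a b c : ℂ} (h : a ≠ 0) : ![a, b, c] ≠ 0 :=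
  fun hh => h (by simpa using congrFun hh 0)

lemma vne₁ {a b c : ℂ} (h : b ≠ 0) : ![a, b, c] ≠ 0 :=
  fun hh => h (by simpa using congrFun hh 1)

lemma vne₂ {a b c : ℂ} (h : c ≠ 0) : ![a, b, c] ≠ 0 :=
  fun hh => h (by simpa using congrFun hh 2)

/-- The point (or line) of `ℙ²(ℂ)` with homogeneous coordinates `[a : b : c]`. -/
def mkP (a b c : ℂ) (h : ![a, b, c] ≠ 0) : P2 := Projectivization.mk ℂ ![a, b, c] h

/-- Incidence: the point `p` lies on the line `L`
(the line being given by its coefficient vector, up to scalar). -/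
def Incid (p L : P2) : Prop := ∑ i : Fin 3, p.rep i * L.rep i = 0

/-- The multiplicity of a point `p` with respect to the line arrangement `A`:
the number of lines of `A` passing through `p`. -/
def mult (A : Finset P2) (p : P2) : ℕ := (A.filter fun L => Incid p L).card

/-- `p` is a singular point of the arrangement `A`: it lies on at least two of its lines. -/
def IsSing (A : Finset P2) (p : P2) : Prop := 2 ≤ mult A p

/-- The set of singular points of `A`. -/
def Sing (A : Finset P2) : Set P2 := {p | IsSing A p}

/-- `tr A r` is the number of singular points of `A` of multiplicity exactly `r`. -/
def tr (A : Finset P2) (r : ℕ) : ℕ := {p : P2 | mult A p = r}.ncard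

/-- `P` is a modular point of `A`: it is a singular point, and for every singular point
`Q ≠ P` the line through `P` and `Q` belongs to `A`. -/
def IsModular (A : Finset P2) (P : P2) : Prop :=
  IsSing A P ∧ ∀ Q : P2, IsSing A Q → Q ≠ P → ∃ L ∈ A, Incid P L ∧ Incid Q L

/-- A line arrangement in `ℙ²(ℂ)` is supersolvable iff it has a modular point. -/
def Supersolvable (A : Finset P2) : Prop := ∃ P : P2, IsModular A P

/-- The extension-to-supersolvability number: the least `k` such that `A` is contained in a
supersolvable arrangement with `|A| + k` lines. -/
def extSS (A : Finset P2) : ℕ :=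
  sInf {k : ℕ | ∃ B : Finset P2, A ⊆ B ∧ Supersolvable B ∧ B.card = A.card + k}

/-- The Fermat arrangement `F_n`: the `3n` lines defined by the linear factors of
`(x^n - y^n) * (y^n - z^n) * (z^n - x^n)`, namely `x - ζy`, `y - ζz`, `z - ζx`
for `ζ` ranging over the `n`-th roots of unity. -/
def fermatLines (n : ℕ) : Finset P2 :=
  ((Polynomial.nthRoots n (1 : ℂ)).toFinset.image fun ζ => mkP 1 (-ζ) 0 (vne₀ one_ne_zero)) ∪
  ((Polynomial.nthRoots n (1 : ℂ)).toFinset.image fun ζ => mkP 0 1 (-ζ) (vne₁ one_ne_zero)) ∪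
  ((Polynomial.nthRoots n (1 : ℂ)).toFinset.image fun ζ => mkP (-ζ) 0 1 (vne₂ one_ne_zero))

/-- The line `x = 0`. -/
def lineX : P2 := mkP 1 0 0 (vne₀ one_ne_zero)

/-- The line `y = 0`. -/
def lineY : P2 := mkP 0 1 0 (vne₁ one_ne_zero)

/-- The arrangement of the `3n+2` lines given by the linear factors of
`x·y·(x^n - y^n)(y^n - z^n)(z^n - x^n)`. -/
def FermatPlus (n : ℕ) : Finset P2 := fermatLines n ∪ {lineX, lineY}

lemma incid_mkP_right (p : P2) (a b c : ℂ) (h : ![a, b, c] ≠ 0) :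
    Incid p (mkP a b c h) ↔ p.rep 0 * a + p.rep 1 * b + p.rep 2 * c = 0 := by
  obtain ⟨u, hu⟩ := Projectivization.exists_smul_eq_mk_rep ℂ ![a, b, c] h
  have h0 : (mkP a b c h).rep = u • ![a, b, c] := hu.symm
  have key : ∑ i : Fin 3, p.rep i * (mkP a b c h).rep i
      = (u : ℂ) * (p.rep 0 * a + p.rep 1 * b + p.rep 2 * c) := by
    rw [h0, Fin.sum_univ_three]
    simp [Units.smul_def]
    ring
  rw [Incid, key]
  simp

lemma incid_mkP_mkP (a b c a' b' c' : ℂ) (h : ![a, b, c] ≠ 0) (h' : ![a', b', c'] ≠ 0) :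
    Incid (mkP a b c h) (mkP a' b' c' h') ↔ a * a' + b * b' + c * c' = 0 := by
  obtain ⟨u, hu⟩ := Projectivization.exists_smul_eq_mk_rep ℂ ![a, b, c] h
  have h0 : (mkP a b c h).rep = u • ![a, b, c] := hu.symm
  have key : u * a * a' + u * b * b' + u * c * c' = (u : ℂ) * (a * a' + b * b' + c * c') := by
    ring
  rw [incid_mkP_right, h0]
  simp only [Units.smul_def, Pi.smul_apply, smul_eq_mul, Matrix.cons_val]
  rw [key]
  simp

lemma mkP_eq_iff (a b c a' b' c' : ℂ) (h : ![a, b, c] ≠ 0) (h' : ![a', b', c'] ≠ 0) :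
    mkP a b c h = mkP a' b' c' h' ↔ ∃ t : ℂ, t * a' = a ∧ t * b' = b ∧ t * c' = c := by
  simp [mkP, Projectivization.mk_eq_mk_iff', funext_iff, Fin.forall_fin_succ]

lemma mem_roots_iff {n : ℕ} (hn : 3 ≤ n) (ζ : ℂ) :
    ζ ∈ (Polynomial.nthRoots n (1 : ℂ)).toFinset ↔ ζ ^ n = 1 := by
  rw [Multiset.mem_toFinset, Polynomial.mem_nthRoots (by omega)]

lemma card_roots {n : ℕ} (hn : 3 ≤ n) :
    (Polynomial.nthRoots n (1 : ℂ)).toFinset.card = n := by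
  have h := (Complex.isPrimitiveRoot_exp n (by omega)).card_nthRootsFinset
  rw [Polynomial.nthRootsFinset_def] at h
  convert h

lemma root_ne_zero {n : ℕ} (hn : 3 ≤ n) {ζ : ℂ} (h : ζ ^ n = 1) : ζ ≠ 0 := by
  rintro rfl
  rw [zero_pow (by omega)] at h
  exact zero_ne_one h

lemma mem_fermatPlus {n : ℕ} (hn : 3 ≤ n) (L : P2) :
    L ∈ FermatPlus n ↔
      (∃ ζ : ℂ, ζ ^ n = 1 ∧ mkP 1 (-ζ) 0 (vne₀ one_ne_zero) = L) ∨
      (∃ ζ : ℂ, ζ ^ n = 1 ∧ mkP 0 1 (-ζ) (vne₁ one_ne_zero) = L) ∨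
      (∃ ζ : ℂ, ζ ^ n = 1 ∧ mkP (-ζ) 0 1 (vne₂ one_ne_zero) = L) ∨
      L = lineX ∨ L = lineY := by
  simp only [FermatPlus, fermatLines, Finset.mem_union, Finset.mem_image, mem_roots_iff hn,
    Finset.mem_insert, Finset.mem_singleton, or_assoc]

lemma lineX_mem {n : ℕ} (hn : 3 ≤ n) : lineX ∈ FermatPlus n := by
  simp [mem_fermatPlus hn]

lemma lineY_mem {n : ℕ} (hn : 3 ≤ n) : lineY ∈ FermatPlus n := by
  simp [mem_fermatPlus hn]

lemma lineX_ne_lineY : lineX ≠ lineY := by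
  simp [lineX, lineY, mkP_eq_iff]

lemma card_fermatPlus {n : ℕ} (hn : 3 ≤ n) : (FermatPlus n).card = 3 * n + 2 := by
  rw [FermatPlus, fermatLines, Finset.card_union_of_disjoint, Finset.card_union_of_disjoint,
    Finset.card_union_of_disjoint, Finset.card_image_of_injective, Finset.card_image_of_injective,
    Finset.card_image_of_injective, Finset.card_pair lineX_ne_lineY, card_roots hn]
  · ring
  · intro ζ η h
    obtain ⟨t, h1, h2, h3⟩ := (mkP_eq_iff ..).1 h
    grind
  · intro ζ η h
    obtain ⟨t, h1, h2, h3⟩ := (mkP_eq_iff ..).1 h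
    grind
  · intro ζ η h
    obtain ⟨t, h1, h2, h3⟩ := (mkP_eq_iff ..).1 h
    grind
  · rw [Finset.disjoint_left]
    simp only [Finset.mem_image, mem_roots_iff hn]
    rintro _ ⟨ζ, hζ, rfl⟩ ⟨η, hη, h⟩
    obtain ⟨t, h1, h2, h3⟩ := (mkP_eq_iff ..).1 h
    grind
  · rw [Finset.disjoint_left]
    simp only [Finset.mem_union, Finset.mem_image, mem_roots_iff hn]
    rintro _ (⟨ζ, hζ, rfl⟩ | ⟨ζ, hζ, rfl⟩) ⟨η, hη, h⟩ <;>
    · obtain ⟨t, h1, h2, h3⟩ := (mkP_eq_iff ..).1 h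
      have := root_ne_zero hn hζ
      have := root_ne_zero hn hη
      grind
  · rw [Finset.disjoint_left]
    simp only [Finset.mem_union, Finset.mem_image, mem_roots_iff hn, Finset.mem_insert,
      Finset.mem_singleton, lineX, lineY]
    rintro _ ((⟨ζ, hζ, rfl⟩ | ⟨ζ, hζ, rfl⟩) | ⟨ζ, hζ, rfl⟩) (h | h) <;>
    · obtain ⟨t, h1, h2, h3⟩ := (mkP_eq_iff ..).1 h
      have := root_ne_zero hn hζ
      grind

/-- Every singular point is on a line of the arrangement through `[0:0:1]`; for the point
`Q = [0:0:1]` itself the line `x = 0` serves. -/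
lemma exists_mem_of_isSing {n : ℕ} (hn : 3 ≤ n) (Q : P2) (hQ : IsSing (FermatPlus n) Q) :
    ∃ L ∈ FermatPlus n, Incid (mkP 0 0 1 (vne₂ one_ne_zero)) L ∧ Incid Q L := by
  by_cases hx : Q.rep 0 = 0
  · exact ⟨lineX, lineX_mem hn, by simp [lineX, incid_mkP_mkP], by simp [lineX, incid_mkP_right, hx]⟩
  by_cases hy : Q.rep 1 = 0
  · exact ⟨lineY, lineY_mem hn, by simp [lineY, incid_mkP_mkP], by simp [lineY, incid_mkP_right, hy]⟩
  suffices h : ∃ ζ : ℂ, ζ ^ n = 1 ∧ Q.rep 0 = ζ * Q.rep 1 by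
    obtain ⟨ζ, hζ, h⟩ := h
    refine ⟨mkP 1 (-ζ) 0 (vne₀ one_ne_zero), (mem_fermatPlus hn _).2 (.inl ⟨ζ, hζ, rfl⟩),
      by simp [incid_mkP_mkP], ?_⟩
    rw [incid_mkP_right, h]
    ring
  -- On a line `y = ζ z` and a line `z = η x` the ratio `x / y` is the root of unity `(ζ η)⁻¹`.
  have mixed : ∀ ζ η : ℂ, ζ ^ n = 1 → η ^ n = 1 → Q.rep 1 = ζ * Q.rep 2 →
      Q.rep 2 = η * Q.rep 0 → ∃ ζ : ℂ, ζ ^ n = 1 ∧ Q.rep 0 = ζ * Q.rep 1 := by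
    intro ζ η hζ hη h1 h2
    have hζ0 := root_ne_zero hn hζ
    have hη0 := root_ne_zero hn hη
    refine ⟨(ζ * η)⁻¹, by rw [inv_pow, mul_pow, hζ, hη]; simp, ?_⟩
    rw [h1, h2]
    field_simp
  obtain ⟨L, hL, M, hM, hne⟩ := Finset.one_lt_card.1 (show 1 < _ from hQ)
  simp only [Finset.mem_filter, mem_fermatPlus hn] at hL hM
  obtain ⟨hL, hQL⟩ := hL
  obtain ⟨hM, hQM⟩ := hM
  rcases hL with ⟨ζ, hζ, rfl⟩ | ⟨ζ, hζ, rfl⟩ | ⟨ζ, hζ, rfl⟩ | rfl | rfl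
  · rw [incid_mkP_right] at hQL
    exact ⟨ζ, hζ, by linear_combination hQL⟩
  · rw [incid_mkP_right] at hQL
    rcases hM with ⟨η, hη, rfl⟩ | ⟨η, hη, rfl⟩ | ⟨η, hη, rfl⟩ | rfl | rfl
    · rw [incid_mkP_right] at hQM
      exact ⟨η, hη, by linear_combination hQM⟩
    · rw [incid_mkP_right] at hQM
      have : ζ ≠ η := by rintro rfl; exact hne rfl
      grind
    · rw [incid_mkP_right] at hQM
      exact mixed ζ η hζ hη (by linear_combination hQL) (by linear_combination hQM)
    · simp [lineX, incid_mkP_right, hx] at hQM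
    · simp [lineY, incid_mkP_right, hy] at hQM
  · rw [incid_mkP_right] at hQL
    rcases hM with ⟨η, hη, rfl⟩ | ⟨η, hη, rfl⟩ | ⟨η, hη, rfl⟩ | rfl | rfl
    · rw [incid_mkP_right] at hQM
      exact ⟨η, hη, by linear_combination hQM⟩
    · rw [incid_mkP_right] at hQM
      exact mixed η ζ hη hζ (by linear_combination hQM) (by linear_combination hQL)
    · rw [incid_mkP_right] at hQM
      have : ζ ≠ η := by rintro rfl; exact hne rfl
      grind
    · simp [lineX, incid_mkP_right, hx] at hQM
    · simp [lineY, incid_mkP_right, hy] at hQM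
  · simp [lineX, incid_mkP_right, hx] at hQL
  · simp [lineY, incid_mkP_right, hy] at hQL

lemma isModular_fermatPlus {n : ℕ} (hn : 3 ≤ n) :
    IsModular (FermatPlus n) (mkP 0 0 1 (vne₂ one_ne_zero)) := by
  refine ⟨?_, fun Q hQ _ => exists_mem_of_isSing hn Q hQ⟩
  refine Finset.one_lt_card.2 ⟨lineX, ?_, lineY, ?_, lineX_ne_lineY⟩
  · exact Finset.mem_filter.2 ⟨lineX_mem hn, by simp [lineX, incid_mkP_mkP]⟩
  · exact Finset.mem_filter.2 ⟨lineY_mem hn, by simp [lineY, incid_mkP_mkP]⟩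

/-- For every `n ≥ 3`, the arrangement of the `3n + 2` lines given by the
linear factors of `x·y·(x^n - y^n)(y^n - z^n)(z^n - x^n)` is supersolvable; indeed the point
`[0:0:1]` is a modular point of this arrangement. -/
theorem stmt_11 (n : ℕ) (hn : 3 ≤ n) :
    (FermatPlus n).card = 3 * n + 2 ∧
    IsModular (FermatPlus n) (mkP 0 0 1 (vne₂ one_ne_zero)) ∧
    Supersolvable (FermatPlus n) := by
  exact ⟨card_fermatPlus hn, isModular_fermatPlus hn, _, isModular_fermatPlus hn⟩
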